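/- arXiv:math/0611372 — 2 statements merged into one kernel-verified Lean document; each statement's English description precedes it below -/
import Mathlib

section
/- Let ν_i = 1/2 for i ∈ {0, k−1} and ν_i = 1 for i ∈ {1,…,k−2}; let q_i = (ν_i/(2(k−1))) · Σ_{j=0}^{2k−3} cos(j(k−1−i)π/(k−1)) · ∫_{−1}^{1} T_j(x) v(x) dx and p_i = ν_i/(k−1) − r q_i for i = 0,…,k−1; and let α₀^{(k)} := min{ ν_i/((k−1) q_i) : i ∈ {0,…,k−1}, q_i > 0 }. Then for every r ∈ [0, α₀^{(k)}], the design ξ = r·(v·λ̃) + Σ_{i=0}^{k−1} p_i δ_{cos(π(k−1−i)/(k−1))} is e_k-optimal in Υ_v[r]. (Theorem 3.2) -/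
/-!
Put `n = k - 1` and let `t_i` be the extrema of `T_n` on `[-1, 1]`, where `T_n = ± 1`.

*Optimality criterion* (`ekOptimal_of_orthogonal`). If `T_n` is orthogonal in `L²(ξ)` to
`1, x, …, x^{n-1}`, then `M(ξ)⁻¹ e_k` is a multiple of the coefficient vector of `T_n`. For any
other `η`, nonnegativity of the quadratic form of `M(η)` at `M(ξ)⁻¹ e_k - M(η)⁻¹ e_k`
(`inv_apply_le`) reduces the claim to `∫ T_n² dη ≤ ∫ T_n² dξ`. This inequality holds because `η`
dominates `r (v·λ̃)`, has total mass one, and `T_n² ≤ 1` on `[-1, 1]` with equality at the `t_i`,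
which carry all of `ξ - r (v·λ̃)` (`integral_T_sq_le`).

*Orthogonality*. It suffices to test against `T_j`, `j < n` (`map_X_pow_mul_T_eq_zero`). The
weights `ν_i / n` annihilate `T_n T_j` by discrete orthogonality of cosines
(`sum_weight_cos_mul_cos`). Since `2 T_n T_j = T_{n+j} + T_{n-j}`, and `T_{n+j}`, `T_{n-j}` agree at
the `t_i`, the weights `q_i` integrate `T_n T_j` exactly as `v·λ̃` does (`sum_q_cos_mul_cos`); hence
subtracting `r q_i` from the weights cancels the contribution of `r (v·λ̃)`.

The moment matrix of `ξ` is invertible since `ξ` has either all `k` nodes in its support (`r = 0`) or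
an atomless part (`design_det_ne_zero`). The bound on `r` is what makes the `p_i` nonnegative.
-/

set_option autoImplicit false

open MeasureTheory Set ENNReal

/-- The uniform (normalized Lebesgue) distribution on `[-1, 1]`. -/
noncomputable def unif : Measure ℝ := (2 : ℝ≥0∞)⁻¹ • volume.restrict (Icc (-1) 1)

/-- Membership in the class `Ξ` of designs on `[-1,1]`: probability measures that are a finite
sum of point masses (in `[-1,1]`) plus a part absolutely continuous with respect to Lebesgue
measure with a density of bounded variation. -/
def MemXi (ξ : Measure ℝ) : Prop :=
  IsProbabilityMeasure ξ ∧
  ∃ (s : Finset ℝ) (w : ℝ → ℝ≥0∞) (d : ℝ → ℝ),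
    (↑s : Set ℝ) ⊆ Icc (-1) 1 ∧
    BoundedVariationOn d (Icc (-1) 1) ∧ (∀ x, 0 ≤ d x) ∧
    ξ = (∑ t ∈ s, w t • Measure.dirac t)
        + (volume.restrict (Icc (-1) 1)).withDensity (fun x => ENNReal.ofReal (d x))

/-- The measure `v·λ̃` with density `v` with respect to the uniform distribution on `[-1,1]`. -/
noncomputable def vMeas (v : ℝ → ℝ) : Measure ℝ :=
  unif.withDensity fun x => ENNReal.ofReal (v x)

/-- Membership in `Υ_v[r] = {ξ ∈ Ξ : r·(v·λ̃) ≤ ξ}`. -/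
def MemUps (v : ℝ → ℝ) (r : ℝ) (ξ : Measure ℝ) : Prop :=
  MemXi ξ ∧ ENNReal.ofReal r • vMeas v ≤ ξ

/-- The moment (information) matrix `M(ξ) = ∫ f fᵀ dξ` for polynomial regression
`f(x) = (1, x, …, x^{k-1})ᵀ`. -/
noncomputable def designMatrix (k : ℕ) (ξ : Measure ℝ) : Matrix (Fin k) (Fin k) ℝ :=
  Matrix.of fun i j => ∫ x, x ^ ((i : ℕ) + (j : ℕ)) ∂ξ

/-- The index `k-1` (corresponding to `e_k`) in `Fin k`. -/
def lastIdx (k : ℕ) (hk : 0 < k) : Fin k := ⟨k - 1, Nat.sub_lt hk one_pos⟩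

/-- `ξ` is `e_k`-optimal in `Υ_v[r]`: `M(ξ)` is invertible and `e_kᵀ M(ξ)⁻¹ e_k` is minimal
among all `η ∈ Υ_v[r]` with invertible moment matrix. -/
def EkOptimal (k : ℕ) (hk : 0 < k) (v : ℝ → ℝ) (r : ℝ) (ξ : Measure ℝ) : Prop :=
  MemUps v r ξ ∧ (designMatrix k ξ).det ≠ 0 ∧
  ∀ η : Measure ℝ, MemUps v r η → (designMatrix k η).det ≠ 0 →
    (designMatrix k ξ)⁻¹ (lastIdx k hk) (lastIdx k hk)
      ≤ (designMatrix k η)⁻¹ (lastIdx k hk) (lastIdx k hk)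

/-- The polynomial `y ↦ e_kᵀ M(ξ)⁻¹ f(y)` with `f(y) = (1, y, …, y^{k-1})ᵀ`. -/
noncomputable def ekPoly (k : ℕ) (hk : 0 < k) (ξ : Measure ℝ) (y : ℝ) : ℝ :=
  ((designMatrix k ξ)⁻¹.mulVec fun i : Fin k => y ^ (i : ℕ)) (lastIdx k hk)

/-! ### Trigonometric sums over the Chebyshev extrema -/

/-- Telescoping form of the trapezoidal sum of a cosine over equispaced angles. -/
lemma sin_half_mul_trapezoid (a : ℝ) (N : ℕ) :
    Real.sin (a / 2) * ∑ l ∈ Finset.range N, (Real.cos (l * a) + Real.cos ((l + 1 : ℕ) * a))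
      = Real.cos (a / 2) * Real.sin (N * a) := by
  induction N with
  | zero => simp
  | succ N ih =>
    rw [Finset.sum_range_succ, mul_add, ih]
    have h1 : (N : ℝ) * a = (N * a + a / 2) - a / 2 := by ring
    have h2 : ((N + 1 : ℕ) : ℝ) * a = (N * a + a / 2) + a / 2 := by push_cast; ring
    rw [h2]
    nth_rewrite 1 [h1]
    nth_rewrite 2 [h1]
    generalize (N : ℝ) * a + a / 2 = b
    rw [Real.cos_add, Real.cos_sub, Real.sin_add, Real.sin_sub]
    ring

/-- The trapezoidal rule with `n` panels on `[0, π]` integrates `cos (m ·)` exactly, except for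
aliasing when `2 n ∣ m`. -/
lemma trapezoid_cos (n : ℕ) (hn : 0 < n) (m : ℤ) :
    ∑ l ∈ Finset.range n, (Real.cos (m * (Real.pi * (l : ℝ) / n))
        + Real.cos (m * (Real.pi * ((l + 1 : ℕ) : ℝ) / n)))
      = if (2 * n : ℤ) ∣ m then 2 * (n : ℝ) else 0 := by
  have hn' : (n : ℝ) ≠ 0 := by positivity
  split_ifs with h
  · obtain ⟨c, rfl⟩ := h
    have key : ∀ l : ℕ, Real.cos (((2 * n * c : ℤ) : ℝ) * (Real.pi * (l : ℝ) / n)) = 1 := by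
      intro l
      have : ((2 * n * c : ℤ) : ℝ) * (Real.pi * (l : ℝ) / n) = ((c * l : ℤ) : ℝ) * (2 * Real.pi) := by
        push_cast; field_simp
      rw [this, Real.cos_int_mul_two_pi]
    simp only [key]
    simp; ring
  · set a : ℝ := m * Real.pi / n with ha
    have hs : Real.sin (a / 2) ≠ 0 := by
      rw [Real.sin_ne_zero_iff]
      intro c hc
      apply h
      refine ⟨c, ?_⟩
      have hpi := Real.pi_ne_zero
      have : (m : ℝ) = 2 * n * c := by
        rw [ha] at hc
        field_simp at hc
        linarith
      exact_mod_cast this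
    have ht := sin_half_mul_trapezoid a n
    have hna : (n : ℝ) * a = m * Real.pi := by rw [ha]; field_simp
    rw [hna, Real.sin_int_mul_pi, mul_zero] at ht
    have hz := (mul_eq_zero.mp ht).resolve_left hs
    rw [← hz]
    refine Finset.sum_congr rfl fun l _ => ?_
    rw [ha]
    congr 2 <;> ring

/-- The angle of the `i`-th Chebyshev extremum, in the order making the nodes increase. -/
noncomputable def ang (n : ℕ) (i : Fin (n + 1)) : ℝ := Real.pi * ((n - (i : ℕ) : ℕ) : ℝ) / n

/-- The weights `ν` are those of the trapezoidal rule, up to the factor `1 / n`. -/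
lemma sum_weight_cos (n : ℕ) (hn : 0 < n) (ν : Fin (n + 1) → ℝ)
    (hν : ∀ i, ν i = if (i : ℕ) = 0 ∨ (i : ℕ) = n then 1 / 2 else 1) (m : ℤ) :
    ∑ i, ν i * Real.cos (m * ang n i) = if (2 * n : ℤ) ∣ m then (n : ℝ) else 0 := by
  set g : ℕ → ℝ := fun l => Real.cos (m * (Real.pi * (l : ℝ) / n)) with hg
  have h1 : ∑ i, ν i * Real.cos (m * ang n i)
      = ∑ l ∈ Finset.range (n + 1), (if l = 0 ∨ l = n then (1 / 2 : ℝ) else 1) * g l := by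
    rw [← Finset.sum_range_reflect, ← Fin.sum_univ_eq_sum_range
      (fun j => (if n + 1 - 1 - j = 0 ∨ n + 1 - 1 - j = n then (1 / 2 : ℝ) else 1)
        * g (n + 1 - 1 - j))]
    refine Finset.sum_congr rfl fun i _ => ?_
    rw [hν]
    have : ((i : ℕ) = 0 ∨ (i : ℕ) = n) ↔ (n + 1 - 1 - (i : ℕ) = 0 ∨ n + 1 - 1 - (i : ℕ) = n) := by
      have := i.2
      omega
    simp only [this]
    rfl
  have h2 : ∀ l ∈ Finset.range (n + 1), (if l = 0 ∨ l = n then (1 / 2 : ℝ) else 1) * g l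
      = 1 / 2 * (if l = n then 0 else g l) + 1 / 2 * (if l = 0 then 0 else g l) := by
    intro l _
    rcases Nat.eq_zero_or_pos l with h0 | h0
    · subst h0
      simp [hn.ne]
    · by_cases hl : l = n
      · subst hl; simp [hn.ne']
      · simp [hl, h0.ne']; ring
  have h3 : ∑ l ∈ Finset.range (n + 1), (if l = n then 0 else g l) = ∑ l ∈ Finset.range n, g l := by
    rw [Finset.sum_range_succ, if_pos rfl, add_zero]
    refine Finset.sum_congr rfl fun l hl => if_neg (Finset.mem_range.mp hl).ne
  have h4 : ∑ l ∈ Finset.range (n + 1), (if l = 0 then 0 else g l)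
      = ∑ l ∈ Finset.range n, g (l + 1) := by
    rw [Finset.sum_range_succ']
    simp
  have h5 := trapezoid_cos n hn m
  rw [Finset.sum_add_distrib] at h5
  rw [h1, Finset.sum_congr rfl h2, Finset.sum_add_distrib, ← Finset.mul_sum, ← Finset.mul_sum,
    h3, h4, ← mul_add]
  have h6 : ∑ l ∈ Finset.range n, g l + ∑ l ∈ Finset.range n, g (l + 1)
      = if (2 * n : ℤ) ∣ m then 2 * (n : ℝ) else 0 := h5
  rw [h6]
  split_ifs <;> ring

lemma sum_weight_cos_mul_cos (n : ℕ) (hn : 0 < n) (ν : Fin (n + 1) → ℝ)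
    (hν : ∀ i, ν i = if (i : ℕ) = 0 ∨ (i : ℕ) = n then 1 / 2 else 1) (a b : ℤ) :
    ∑ i, ν i * (Real.cos (a * ang n i) * Real.cos (b * ang n i))
      = ((if (2 * n : ℤ) ∣ a + b then (n : ℝ) else 0)
        + (if (2 * n : ℤ) ∣ a - b then (n : ℝ) else 0)) / 2 := by
  rw [← sum_weight_cos n hn ν hν, ← sum_weight_cos n hn ν hν, ← Finset.sum_add_distrib,
    Finset.sum_div]
  refine Finset.sum_congr rfl fun i _ => ?_
  push_cast
  rw [add_mul, sub_mul, Real.cos_add, Real.cos_sub]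
  ring

/-- Aliasing: the quadrature weights `q` built from the first `2 n` Chebyshev moments `c` reproduce
`∫ T_n T_j` for `j < n`. The moments of `T_{n-j}` and `T_{n+j}` are not reproduced individually, only
their sum is. -/
lemma sum_q_cos_mul_cos (n : ℕ) (hn : 0 < n) (ν q : Fin (n + 1) → ℝ) (c : ℕ → ℝ)
    (hν : ∀ i, ν i = if (i : ℕ) = 0 ∨ (i : ℕ) = n then 1 / 2 else 1)
    (hq : ∀ i, q i = ν i / (2 * n) *
      ∑ m ∈ Finset.range (2 * n), Real.cos (((m : ℕ) : ℤ) * ang n i) * c m)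
    (j : ℕ) (hj : j < n) :
    ∑ i, q i * (Real.cos ((n : ℤ) * ang n i) * Real.cos ((j : ℤ) * ang n i))
      = (c (n - j) + c (n + j)) / 4 := by
  have hn' : (n : ℝ) ≠ 0 := by positivity
  have h1 : ∀ i, q i * (Real.cos ((n : ℤ) * ang n i) * Real.cos ((j : ℤ) * ang n i))
      = ∑ m ∈ Finset.range (2 * n), c m / (4 * n) *
        (ν i * (Real.cos (((m : ℕ) : ℤ) * ang n i) * Real.cos (((n + j : ℕ) : ℤ) * ang n i))
        + ν i * (Real.cos (((m : ℕ) : ℤ) * ang n i) * Real.cos (((n - j : ℤ)) * ang n i))) := by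
    intro i
    rw [hq, Finset.mul_sum, Finset.sum_mul]
    refine Finset.sum_congr rfl fun m _ => ?_
    push_cast
    rw [add_mul (n : ℝ), sub_mul (n : ℝ), Real.cos_add, Real.cos_sub]
    field_simp
    ring
  simp_rw [h1]
  rw [Finset.sum_comm]
  simp_rw [← Finset.mul_sum, Finset.sum_add_distrib]
  have h2 : ∀ m ∈ Finset.range (2 * n), c m / (4 * n) *
      (∑ i, ν i * (Real.cos (((m : ℕ) : ℤ) * ang n i) * Real.cos (((n + j : ℕ) : ℤ) * ang n i))
        + ∑ i, ν i * (Real.cos (((m : ℕ) : ℤ) * ang n i) * Real.cos (((n - j : ℤ)) * ang n i)))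
      = (if m = n - j then c m / 4 else 0) + (if m = n + j then c m / 4 else 0) := by
    intro m hm
    have hm' := Finset.mem_range.mp hm
    have e1 := sum_weight_cos_mul_cos n hn ν hν m ((n + j : ℕ) : ℤ)
    have e2 := sum_weight_cos_mul_cos n hn ν hν m (n - j : ℤ)
    have d1 : (2 * n : ℤ) ∣ m + ((n + j : ℕ) : ℤ) ↔ m = n - j := by
      constructor
      · rintro ⟨e, he⟩
        push_cast at he
        have : e = 1 := by
          have h0 : 0 < e := by
            by_contra h; push Not at h; nlinarith
          have h0 : e < 2 := by
            by_contra h; push Not at h; nlinarith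
          omega
        subst this; omega
      · rintro rfl; exact ⟨1, by omega⟩
    have d2 : (2 * n : ℤ) ∣ m - ((n + j : ℕ) : ℤ) ↔ m = n + j := by
      constructor
      · rintro ⟨e, he⟩
        push_cast at he
        have : e = 0 := by
          have h0 : -1 < e := by
            by_contra h; push Not at h; nlinarith
          have h0 : e < 1 := by
            by_contra h; push Not at h; nlinarith
          omega
        subst this; omega
      · rintro rfl; exact ⟨0, by omega⟩
    have d3 : (2 * n : ℤ) ∣ m + (n - j : ℤ) ↔ m = n + j := by
      constructor
      · rintro ⟨e, he⟩
        have : e = 1 := by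
          have h0 : 0 < e := by
            by_contra h; push Not at h; nlinarith
          have h0 : e < 2 := by
            by_contra h; push Not at h; nlinarith
          omega
        subst this; omega
      · rintro rfl; exact ⟨1, by push_cast; ring⟩
    have d4 : (2 * n : ℤ) ∣ m - (n - j : ℤ) ↔ m = n - j := by
      constructor
      · rintro ⟨e, he⟩
        have : e = 0 := by
          have h0 : -1 < e := by
            by_contra h; push Not at h; nlinarith
          have h0 : e < 1 := by
            by_contra h; push Not at h; nlinarith
          omega
        subst this; omega
      · rintro rfl; exact ⟨0, by omega⟩
    simp only [d1, d2] at e1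
    simp only [d3, d4] at e2
    push_cast at e1 e2 ⊢
    rw [e1, e2]
    split_ifs <;> field_simp <;> ring
  rw [Finset.sum_congr rfl h2, Finset.sum_add_distrib, Finset.sum_ite_eq', Finset.sum_ite_eq',
    if_pos (Finset.mem_range.mpr (by omega)), if_pos (Finset.mem_range.mpr (by omega))]
  ring

lemma sum_q (n : ℕ) (hn : 0 < n) (ν q : Fin (n + 1) → ℝ) (c : ℕ → ℝ)
    (hν : ∀ i, ν i = if (i : ℕ) = 0 ∨ (i : ℕ) = n then 1 / 2 else 1)
    (hq : ∀ i, q i = ν i / (2 * n) *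
      ∑ m ∈ Finset.range (2 * n), Real.cos (((m : ℕ) : ℤ) * ang n i) * c m) :
    ∑ i, q i = c 0 / 2 := by
  have hn' : (n : ℝ) ≠ 0 := by positivity
  have h1 : ∀ i, q i = ∑ m ∈ Finset.range (2 * n), c m / (2 * n) *
        (ν i * Real.cos (((m : ℕ) : ℤ) * ang n i)) := by
    intro i
    rw [hq, Finset.mul_sum]
    refine Finset.sum_congr rfl fun m _ => ?_
    ring
  simp_rw [h1]
  rw [Finset.sum_comm]
  simp_rw [← Finset.mul_sum]
  have h2 : ∀ m ∈ Finset.range (2 * n), c m / (2 * n) *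
      ∑ i, ν i * Real.cos (((m : ℕ) : ℤ) * ang n i) = if m = 0 then c m / 2 else 0 := by
    intro m hm
    have hm' := Finset.mem_range.mp hm
    rw [sum_weight_cos n hn ν hν]
    have d : (2 * n : ℤ) ∣ (m : ℤ) ↔ m = 0 := by
      constructor
      · intro h
        exact Nat.eq_zero_of_dvd_of_lt (by exact_mod_cast h) hm'
      · rintro rfl; simp
    simp only [d]
    split_ifs <;> field_simp
    ring
  rw [Finset.sum_congr rfl h2, Finset.sum_ite_eq', if_pos (Finset.mem_range.mpr (by omega))]

/-! ### Chebyshev polynomials and lower-degree monomials -/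

/-- A linear functional that annihilates `T_i T_n` for `i < n` annihilates `X ^ j T_n` for
`j < n`. The induction lets `i` range over `ℤ`, so that `2 X T_i = T_{i+1} + T_{i-1}` holds uniformly. -/
lemma map_X_pow_mul_T_eq_zero (L : Polynomial ℝ →ₗ[ℝ] ℝ) (n : ℕ)
    (h : ∀ i : ℕ, i < n → L (Polynomial.Chebyshev.T ℝ i * Polynomial.Chebyshev.T ℝ n) = 0)
    (j : ℕ) (hj : j < n) : L (Polynomial.X ^ j * Polynomial.Chebyshev.T ℝ n) = 0 := by
  have key : ∀ (j : ℕ) (i : ℤ), i.natAbs + j < n →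
      L (Polynomial.X ^ j * Polynomial.Chebyshev.T ℝ i * Polynomial.Chebyshev.T ℝ n) = 0 := by
    intro j
    induction j with
    | zero =>
      intro i hi
      rw [pow_zero, one_mul, ← Polynomial.Chebyshev.T_natAbs]
      exact h _ (by omega)
    | succ j ih =>
      intro i hi
      have h1 := ih (i + 1) (by omega)
      have h2 := ih (i - 1) (by omega)
      have e : (2 : ℝ) • (Polynomial.X ^ (j + 1) * Polynomial.Chebyshev.T ℝ i
            * Polynomial.Chebyshev.T ℝ n)
          = Polynomial.X ^ j * Polynomial.Chebyshev.T ℝ (i + 1) * Polynomial.Chebyshev.T ℝ n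
          + Polynomial.X ^ j * Polynomial.Chebyshev.T ℝ (i - 1) * Polynomial.Chebyshev.T ℝ n := by
        rw [Polynomial.Chebyshev.T_add_one, two_smul]
        ring
      have h3 := congrArg L e
      rw [map_smul, map_add, h1, h2, smul_eq_mul] at h3
      linarith
  have := key j 0 (by simpa using hj)
  simpa using this

/-! ### Integration of polynomials against designs -/

lemma integrable_of_continuous {μ : Measure ℝ} [IsFiniteMeasure μ]
    (hμ : μ (Icc (-1) 1)ᶜ = 0) {g : ℝ → ℝ} (hg : Continuous g) : Integrable g μ := by
  have h := hg.continuousOn.integrableOn_compact (μ := μ) (isCompact_Icc (a := (-1 : ℝ)) (b := 1))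
  rwa [IntegrableOn, Measure.restrict_eq_self_of_ae_mem] at h
  exact hμ

/-- The polynomial with coefficient vector `x`. -/
noncomputable def vecPoly {k : ℕ} (x : Fin k → ℝ) : Polynomial ℝ :=
  ∑ i, Polynomial.C (x i) * Polynomial.X ^ (i : ℕ)

lemma eval_vecPoly {k : ℕ} (x : Fin k → ℝ) (y : ℝ) :
    (vecPoly x).eval y = ∑ i, x i * y ^ (i : ℕ) := by
  simp [vecPoly, Polynomial.eval_finsetSum]

lemma coeff_vecPoly {k : ℕ} (x : Fin k → ℝ) (i : Fin k) : (vecPoly x).coeff i = x i := by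
  simp [vecPoly, Polynomial.coeff_X_pow, Fin.val_inj]

lemma natDegree_vecPoly_lt {k : ℕ} (hk : 0 < k) (x : Fin k → ℝ) : (vecPoly x).natDegree < k := by
  have : (vecPoly x).natDegree ≤ k - 1 := by
    refine Polynomial.natDegree_sum_le_of_forall_le _ _ fun i _ => ?_
    refine (Polynomial.natDegree_C_mul_X_pow_le _ _).trans (by have := i.2; omega)
  omega

lemma vecPoly_coeff {k : ℕ} (P : Polynomial ℝ) (hP : P.natDegree < k) :
    vecPoly (fun i : Fin k => P.coeff i) = P := by
  conv_rhs => rw [P.as_sum_range_C_mul_X_pow' hP]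
  rw [vecPoly, Fin.sum_univ_eq_sum_range (fun i => Polynomial.C (P.coeff i) * Polynomial.X ^ i)]

lemma designMatrix_mulVec {k : ℕ} {μ : Measure ℝ} [IsFiniteMeasure μ]
    (hμ : μ (Icc (-1) 1)ᶜ = 0) (x : Fin k → ℝ) (i : Fin k) :
    (designMatrix k μ).mulVec x i = ∫ y, y ^ (i : ℕ) * (vecPoly x).eval y ∂μ := by
  simp only [eval_vecPoly, Finset.mul_sum]
  rw [integral_finsetSum _ fun j _ => integrable_of_continuous hμ (by fun_prop)]
  simp only [Matrix.mulVec, dotProduct, designMatrix, Matrix.of_apply]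
  refine Finset.sum_congr rfl fun j _ => ?_
  rw [← integral_mul_const]
  refine integral_congr_ae (Filter.Eventually.of_forall fun y => ?_)
  simp only [pow_add]; ring

/-- The quadratic form of the moment matrix is the squared `L²(μ)` norm on polynomials. -/
lemma dotProduct_designMatrix {k : ℕ} {μ : Measure ℝ} [IsFiniteMeasure μ]
    (hμ : μ (Icc (-1) 1)ᶜ = 0) (x : Fin k → ℝ) :
    x ⬝ᵥ (designMatrix k μ).mulVec x = ∫ y, (vecPoly x).eval y ^ 2 ∂μ := by
  simp only [dotProduct, designMatrix_mulVec hμ]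
  simp_rw [← integral_const_mul]
  rw [← integral_finsetSum _ fun j _ => integrable_of_continuous hμ (by fun_prop)]
  refine integral_congr_ae (Filter.Eventually.of_forall fun y => ?_)
  simp only
  rw [sq]
  nth_rewrite 2 [eval_vecPoly]
  rw [Finset.sum_mul]
  exact Finset.sum_congr rfl fun j _ => by ring

lemma designMatrix_isSymm (k : ℕ) (μ : Measure ℝ) : (designMatrix k μ).IsSymm := by
  ext i j
  simp [designMatrix, add_comm]

/-- Integration against `μ` as a linear functional on polynomials. -/
noncomputable def intPoly (μ : Measure ℝ) [IsFiniteMeasure μ] (hμ : μ (Icc (-1) 1)ᶜ = 0) :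
    Polynomial ℝ →ₗ[ℝ] ℝ where
  toFun P := ∫ y, P.eval y ∂μ
  map_add' P Q := by
    simp only [Polynomial.eval_add]
    exact integral_add (integrable_of_continuous hμ (by fun_prop))
      (integrable_of_continuous hμ (by fun_prop))
  map_smul' c P := by
    simp [integral_const_mul]

/-! ### The comparison of inverse moment matrices -/

/-- If `w = M⁻¹ e` for an invertible `M`, and `N` is symmetric invertible and positive
semidefinite with `wᵀ N w ≤ wᵀ M w`, then `eᵀ M⁻¹ e ≤ eᵀ N⁻¹ e`: expand
`(w - N⁻¹ e)ᵀ N (w - N⁻¹ e) ≥ 0`. -/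
lemma inv_apply_le {k : ℕ} (M N : Matrix (Fin k) (Fin k) ℝ) (hN : N.IsSymm)
    (hNd : N.det ≠ 0) (hMd : M.det ≠ 0) (hNpos : ∀ x, 0 ≤ x ⬝ᵥ N.mulVec x) (l : Fin k)
    (h : (M⁻¹.mulVec (Pi.single l 1)) ⬝ᵥ N.mulVec (M⁻¹.mulVec (Pi.single l 1))
      ≤ (M⁻¹.mulVec (Pi.single l 1)) ⬝ᵥ M.mulVec (M⁻¹.mulVec (Pi.single l 1))) :
    M⁻¹ l l ≤ N⁻¹ l l := by
  set e : Fin k → ℝ := Pi.single l 1 with he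
  set w := M⁻¹.mulVec e with hw
  set u := N⁻¹.mulVec e with hu
  have hMw : M.mulVec w = e := by
    rw [hw, Matrix.mulVec_mulVec, Matrix.mul_nonsing_inv _ (isUnit_iff_ne_zero.mpr hMd),
      Matrix.one_mulVec]
  have hNu : N.mulVec u = e := by
    rw [hu, Matrix.mulVec_mulVec, Matrix.mul_nonsing_inv _ (isUnit_iff_ne_zero.mpr hNd),
      Matrix.one_mulVec]
  have hwl : w ⬝ᵥ e = M⁻¹ l l := by simp [hw, he]
  have hul : u ⬝ᵥ e = N⁻¹ l l := by simp [hu, he]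
  have hcross : u ⬝ᵥ N.mulVec w = w ⬝ᵥ e := by
    rw [Matrix.dotProduct_mulVec, ← Matrix.mulVec_transpose, hN, hNu, dotProduct_comm]
  have hp := hNpos (w - u)
  rw [Matrix.mulVec_sub, dotProduct_sub, sub_dotProduct, sub_dotProduct, hcross, hNu, hul,
    hwl] at hp
  rw [hMw, hwl] at h
  linarith

/-! ### The measure with density `v` -/

section vMeas

variable {v : ℝ → ℝ}

instance isProbabilityMeasure_unif : IsProbabilityMeasure unif := by
  constructor
  have h2 : ENNReal.ofReal (1 - -1) = 2 := by norm_num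
  simp only [unif, Measure.smul_apply, Measure.restrict_apply_univ, Real.volume_Icc, smul_eq_mul,
    h2]
  exact ENNReal.inv_mul_cancel (by norm_num) (by norm_num)

-- A non-integrable `v` would have integral `0`.
lemma integrable_v (hv1 : ∫ x, v x ∂unif = 1) : Integrable v unif := by
  by_contra h
  rw [integral_undef h] at hv1
  norm_num at hv1

lemma isProbabilityMeasure_vMeas (hv0 : ∀ x, 0 ≤ v x) (hv1 : ∫ x, v x ∂unif = 1) :
    IsProbabilityMeasure (vMeas v) := by
  constructor
  rw [vMeas, withDensity_apply _ MeasurableSet.univ, Measure.restrict_univ,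
    ← ofReal_integral_eq_lintegral_ofReal (integrable_v hv1) (Filter.Eventually.of_forall hv0),
    hv1, ENNReal.ofReal_one]

lemma vMeas_ac (v : ℝ → ℝ) : vMeas v ≪ volume.restrict (Icc (-1) 1) :=
  (withDensity_absolutelyContinuous _ _).trans
    (Measure.smul_absolutelyContinuous (c := (2 : ℝ≥0∞)⁻¹))

lemma vMeas_compl (v : ℝ → ℝ) : vMeas v (Icc (-1) 1)ᶜ = 0 := by
  apply vMeas_ac v
  rw [Measure.restrict_apply measurableSet_Icc.compl]
  simp

lemma integral_vMeas (hv0 : ∀ x, 0 ≤ v x) (hv1 : ∫ x, v x ∂unif = 1) (g : ℝ → ℝ) :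
    ∫ x, g x ∂(vMeas v) = (∫ x in (-1 : ℝ)..1, g x * v x) / 2 := by
  rw [vMeas, integral_withDensity_eq_integral_toReal_smul₀
    (integrable_v hv1).aestronglyMeasurable.aemeasurable.ennreal_ofReal
    (Filter.Eventually.of_forall fun _ => ENNReal.ofReal_lt_top), unif, integral_smul_measure,
    intervalIntegral.integral_of_le (by norm_num), ← integral_Icc_eq_integral_Ioc]
  have : ∀ x, (ENNReal.ofReal (v x)).toReal • g x = g x * v x := fun x => by
    rw [ENNReal.toReal_ofReal (hv0 x), smul_eq_mul, mul_comm]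
  simp only [this]
  simp
  ring

end vMeas

/-! ### The design with point masses at the Chebyshev extrema -/

section Design

variable {ι : Type} [Fintype ι] {V : Measure ℝ} {r : ℝ} {p t : ι → ℝ}

/-- The design `r V + Σ pᵢ δ_{tᵢ}`. -/
noncomputable def design (V : Measure ℝ) (r : ℝ) (p t : ι → ℝ) : Measure ℝ :=
  ENNReal.ofReal r • V + ∑ i, ENNReal.ofReal (p i) • Measure.dirac (t i)

lemma isProbabilityMeasure_design [IsProbabilityMeasure V] (hr : 0 ≤ r) (hp : ∀ i, 0 ≤ p i)
    (hsum : r + ∑ i, p i = 1) : IsProbabilityMeasure (design V r p t) := by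
  constructor
  simp only [design, Measure.add_apply, Measure.smul_apply, measure_univ, smul_eq_mul, mul_one,
    Measure.finsetSum_apply]
  rw [← ENNReal.ofReal_sum_of_nonneg fun i _ => hp i, ← ENNReal.ofReal_add hr
    (Finset.sum_nonneg fun i _ => hp i), hsum, ENNReal.ofReal_one]

lemma design_compl (hV : V (Icc (-1) 1)ᶜ = 0) (ht : ∀ i, t i ∈ Icc (-1 : ℝ) 1) :
    design V r p t (Icc (-1) 1)ᶜ = 0 := by
  simp only [design, Measure.add_apply, Measure.smul_apply, smul_eq_mul,
    Measure.finsetSum_apply, hV, mul_zero, zero_add]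
  refine Finset.sum_eq_zero fun i _ => ?_
  rw [Measure.dirac_apply' _ measurableSet_Icc.compl, indicator_of_notMem (by simpa using ht i),
    mul_zero]

lemma integral_design [IsFiniteMeasure V] (hV : V (Icc (-1) 1)ᶜ = 0) (hr : 0 ≤ r)
    (hp : ∀ i, 0 ≤ p i) {g : ℝ → ℝ} (hg : Continuous g) :
    ∫ y, g y ∂(design V r p t) = r * ∫ y, g y ∂V + ∑ i, p i * g (t i) := by
  have hd : ∀ i, Integrable g (ENNReal.ofReal (p i) • Measure.dirac (t i)) := fun i =>
    (integrable_dirac (by simp)).smul_measure ENNReal.ofReal_ne_top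
  rw [design, integral_add_measure
    ((integrable_of_continuous hV hg).smul_measure ENNReal.ofReal_ne_top)
    (integrable_finsetSum_measure.mpr fun i _ => hd i),
    integral_finsetSum_measure fun i _ => hd i]
  simp only [integral_smul_measure, integral_dirac, ENNReal.toReal_ofReal hr, smul_eq_mul]
  congr 1
  exact Finset.sum_congr rfl fun i _ => by rw [ENNReal.toReal_ofReal (hp i)]

end Design

lemma memUps_design {ι : Type} [Fintype ι] {r : ℝ} {p t : ι → ℝ} {v : ℝ → ℝ}
    (hv0 : ∀ x, 0 ≤ v x)
    (hvBV : BoundedVariationOn v (Icc (-1) 1)) (hv1 : ∫ x, v x ∂unif = 1) (hr : 0 ≤ r)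
    (hp : ∀ i, 0 ≤ p i) (ht : ∀ i, t i ∈ Icc (-1 : ℝ) 1) (hsum : r + ∑ i, p i = 1) :
    MemUps v r (design (vMeas v) r p t) := by
  classical
  have := isProbabilityMeasure_vMeas hv0 hv1
  refine ⟨⟨isProbabilityMeasure_design hr hp hsum, Finset.univ.image t,
    fun s => ∑ i with t i = s, ENNReal.ofReal (p i), fun x => r / 2 * v x, ?_, ?_, ?_, ?_⟩, ?_⟩
  · simpa [Set.range_subset_iff] using ht
  · exact (lipschitzWith_smul (r / 2)).comp_boundedVariationOn hvBV
  · intro x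
    have := hv0 x
    positivity
  · rw [design, add_comm]
    congr 1
    · refine (Finset.sum_image' _ fun i _ => ?_).symm
      rw [Finset.sum_smul]
      refine Finset.sum_congr rfl fun j hj => ?_
      rw [(Finset.mem_filter.mp hj).2]
    · have : (fun x => ENNReal.ofReal (r / 2 * v x))
          = (ENNReal.ofReal r * 2⁻¹) • fun x => ENNReal.ofReal (v x) := by
        ext x
        rw [Pi.smul_apply, smul_eq_mul, ENNReal.ofReal_mul (by positivity),
          div_eq_mul_inv, ENNReal.ofReal_mul hr, ENNReal.ofReal_inv_of_pos (by norm_num)]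
        norm_num
      rw [this, withDensity_smul' _ _ (ENNReal.mul_ne_top ENNReal.ofReal_ne_top (by simp)),
        vMeas, unif, withDensity_smul_measure, smul_smul]
  · exact Measure.le_add_right le_rfl

/-- A nonzero polynomial of degree `< k` has positive `L²`-norm under the design: if `r = 0` it
would vanish at the `k` distinct nodes, otherwise on a set of full measure for the atomless `V`. -/
lemma design_det_ne_zero {k : ℕ} (hk : 0 < k) {V : Measure ℝ} [IsProbabilityMeasure V]
    (hVac : V ≪ volume) (hV : V (Icc (-1) 1)ᶜ = 0) {r : ℝ} (hr : 0 ≤ r) {p t : Fin k → ℝ}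
    (hp : ∀ i, 0 ≤ p i) (hp0 : r = 0 → ∀ i, 0 < p i) (ht : ∀ i, t i ∈ Icc (-1 : ℝ) 1)
    (htinj : Function.Injective t) (hsum : r + ∑ i, p i = 1) :
    (designMatrix k (design V r p t)).det ≠ 0 := by
  have := isProbabilityMeasure_design (V := V) (t := t) hr hp hsum
  rw [ne_eq, ← Matrix.exists_mulVec_eq_zero_iff]
  rintro ⟨x, hx, hMx⟩
  have hP0 : vecPoly x ≠ 0 := by
    intro h
    apply hx
    ext i
    rw [← coeff_vecPoly x i, h]
    simp
  have h0 := dotProduct_designMatrix (design_compl (r := r) (p := p) hV ht) x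
  rw [hMx, dotProduct_zero, integral_design hV hr hp (by fun_prop)] at h0
  have hA : 0 ≤ ∫ y, (vecPoly x).eval y ^ 2 ∂V := integral_nonneg fun y => sq_nonneg _
  have hB : ∀ i ∈ Finset.univ, 0 ≤ p i * (vecPoly x).eval (t i) ^ 2 := fun i _ =>
    mul_nonneg (hp i) (sq_nonneg _)
  have hB' := Finset.sum_nonneg hB
  have hrA := mul_nonneg hr hA
  rcases hr.eq_or_lt with hr0 | hr0
  · have hBz : ∑ i, p i * (vecPoly x).eval (t i) ^ 2 = 0 := by linarith
    rw [Finset.sum_eq_zero_iff_of_nonneg hB] at hBz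
    apply hP0
    refine Polynomial.eq_zero_of_natDegree_lt_card_of_eval_eq_zero _ htinj (fun i => ?_)
      (by simpa using natDegree_vecPoly_lt hk x)
    have := (mul_eq_zero.mp (hBz i (Finset.mem_univ i))).resolve_left (hp0 hr0.symm i).ne'
    exact pow_eq_zero_iff (two_ne_zero) |>.mp this
  · have hAz : r * ∫ y, (vecPoly x).eval y ^ 2 ∂V = 0 := by linarith
    have hAz := (mul_eq_zero.mp hAz).resolve_left hr0.ne'
    rw [integral_eq_zero_iff_of_nonneg (fun y => sq_nonneg _)
      (integrable_of_continuous hV ((vecPoly x).continuous.pow 2))] at hAz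
    have hroots : V {y | (vecPoly x).IsRoot y} = 0 :=
      hVac ((Polynomial.finite_setOfPred_isRoot hP0).measure_zero _)
    have hne : ∀ᵐ y ∂V, ¬ (vecPoly x).IsRoot y := by
      rw [ae_iff]
      simpa using hroots
    obtain ⟨y, hy1, hy2⟩ := (hAz.and hne).exists
    exact hy2 (pow_eq_zero_iff (two_ne_zero) |>.mp hy1)

/-- Upper bound on `∫ T_n² dη` for designs `η ≥ r V`: integrate `1 - T_n²`, which is nonnegative on
`[-1, 1]`, against both measures. -/
lemma integral_T_sq_le {V η : Measure ℝ} [IsProbabilityMeasure V] [IsProbabilityMeasure η]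
    {r : ℝ} (hr : 0 ≤ r)
    (hV : V (Icc (-1) 1)ᶜ = 0) (hη : η (Icc (-1) 1)ᶜ = 0) (hle : ENNReal.ofReal r • V ≤ η) (n : ℤ) :
    ∫ y, (Polynomial.Chebyshev.T ℝ n).eval y ^ 2 ∂η
      ≤ r * ∫ y, (Polynomial.Chebyshev.T ℝ n).eval y ^ 2 ∂V + (1 - r) := by
  have hsq : ∀ {μ : Measure ℝ} [IsProbabilityMeasure μ], μ (Icc (-1) 1)ᶜ = 0 →
      ∫ y, (1 - (Polynomial.Chebyshev.T ℝ n).eval y ^ 2) ∂μ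
        = 1 - ∫ y, (Polynomial.Chebyshev.T ℝ n).eval y ^ 2 ∂μ := by
    intro μ _ hμ
    rw [integral_sub (integrable_const _) (integrable_of_continuous hμ (by fun_prop))]
    simp
  have h := integral_mono_measure hle
    (f := fun y => 1 - (Polynomial.Chebyshev.T ℝ n).eval y ^ 2) (by
      have hη' : ∀ᵐ y ∂η, y ∈ Icc (-1 : ℝ) 1 := hη
      filter_upwards [hη'] with y hy
      have h1 := Polynomial.Chebyshev.abs_eval_T_real_le_one n (abs_le.mpr hy)
      have h2 := (sq_le_one_iff_abs_le_one _).mpr h1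
      simpa using h2)
    (integrable_of_continuous hη (by fun_prop))
  rw [integral_smul_measure, hsq hV, hsq hη, ENNReal.toReal_ofReal hr, smul_eq_mul] at h
  linarith

lemma memXi_compl {η : Measure ℝ} (h : MemXi η) : η (Icc (-1) 1)ᶜ = 0 := by
  obtain ⟨-, s, w, d, hs, -, -, rfl⟩ := h
  rw [Measure.add_apply, Measure.finsetSum_apply]
  have h2 : ((volume.restrict (Icc (-1 : ℝ) 1)).withDensity fun x => ENNReal.ofReal (d x))
      (Icc (-1) 1)ᶜ = 0 := by
    apply withDensity_absolutelyContinuous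
    rw [Measure.restrict_apply measurableSet_Icc.compl]
    simp
  rw [h2, add_zero]
  refine Finset.sum_eq_zero fun i hi => ?_
  rw [Measure.smul_apply, Measure.dirac_apply' _ measurableSet_Icc.compl,
    indicator_of_notMem (by simpa using hs hi), smul_zero]

/-- Sufficient optimality criterion: if `T_n` is orthogonal under `ξ` to all lower powers, so that
`M(ξ)⁻¹ e_k` is a multiple of its coefficient vector, and `ξ` maximises `∫ T_n²` over the
restricted class, then `ξ` is `e_k`-optimal. -/
lemma ekOptimal_of_orthogonal (n : ℕ) {v : ℝ → ℝ} {r : ℝ} {ξ : Measure ℝ}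
    (hξ : MemUps v r ξ) (hdet : (designMatrix (n + 1) ξ).det ≠ 0)
    (horth : ∀ j < n, ∫ y, y ^ j * (Polynomial.Chebyshev.T ℝ n).eval y ∂ξ = 0)
    (hmax : ∀ η, MemUps v r η → ∫ y, (Polynomial.Chebyshev.T ℝ n).eval y ^ 2 ∂η
      ≤ ∫ y, (Polynomial.Chebyshev.T ℝ n).eval y ^ 2 ∂ξ) :
    EkOptimal (n + 1) n.succ_pos v r ξ := by
  refine ⟨hξ, hdet, fun η hη hηdet => ?_⟩
  have := hξ.1.1
  have := hη.1.1
  have hcξ := memXi_compl hξ.1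
  have hcη := memXi_compl hη.1
  set l := lastIdx (n + 1) n.succ_pos with hl
  set c : Fin (n + 1) → ℝ := fun i => (Polynomial.Chebyshev.T ℝ n).coeff i with hc
  have hcP : vecPoly c = Polynomial.Chebyshev.T ℝ n :=
    vecPoly_coeff _ (by rw [Polynomial.Chebyshev.natDegree_T]; simp)
  set M := designMatrix (n + 1) ξ with hM
  obtain ⟨γ, hγ⟩ : ∃ γ : ℝ, M.mulVec c = γ • (Pi.single l 1 : Fin (n + 1) → ℝ) := by
    refine ⟨M.mulVec c l, ?_⟩
    ext i
    by_cases hi : i = l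
    · subst hi; simp
    · have hin : (i : ℕ) < n := by
        have h1 : (i : ℕ) ≠ n := fun h => hi (Fin.ext (by simp [hl, lastIdx, h]))
        have := i.2
        omega
      rw [hM, designMatrix_mulVec hcξ, hcP, horth _ hin]
      simp [hi]
  have hinv : M⁻¹ * M = 1 := Matrix.nonsing_inv_mul _ (isUnit_iff_ne_zero.mpr hdet)
  have hc0 : c ≠ 0 := by
    intro h
    apply Polynomial.Chebyshev.T_ne_zero ℝ (n : ℤ)
    rw [← hcP, h]
    simp [vecPoly]
  have hcγ : c = γ • M⁻¹.mulVec (Pi.single l 1) := by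
    rw [← Matrix.mulVec_smul, ← hγ, Matrix.mulVec_mulVec, hinv, Matrix.one_mulVec]
  have hγ0 : γ ≠ 0 := by
    rintro rfl
    exact hc0 (by rw [hcγ, zero_smul])
  have hw : M⁻¹.mulVec (Pi.single l 1) = γ⁻¹ • c := by
    rw [hcγ, smul_smul, inv_mul_cancel₀ hγ0, one_smul]
  refine inv_apply_le M _ (designMatrix_isSymm _ _) hηdet hdet (fun x => ?_) l ?_
  · rw [dotProduct_designMatrix hcη]
    exact integral_nonneg fun y => sq_nonneg _
  · rw [hw]
    simp only [Matrix.mulVec_smul, smul_dotProduct, dotProduct_smul, smul_eq_mul, hM]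
    rw [dotProduct_designMatrix hcη, dotProduct_designMatrix hcξ, hcP, ← mul_assoc, ← mul_assoc]
    exact mul_le_mul_of_nonneg_left (hmax η hη) (mul_self_nonneg _)

/-! ### Optimality of the Chebyshev design -/

open Real in
/-- **Theorem 3.2**: with `ν_i`, `q_i`, `p_i` as defined and `r ∈ [0, α₀^{(k)}]`
(expressed as `0 ≤ r` together with `r ≤ ν_i/((k-1)q_i)` for every `i` with `q_i > 0`),
the design `ξ = r·(v·λ̃) + Σ_{i=0}^{k-1} p_i δ_{cos(π(k-1-i)/(k-1))}` is `e_k`-optimal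
in `Υ_v[r]`. -/
theorem ekOptimal_of_chebyshev_weights (k : ℕ) (hk : 2 ≤ k)
    (v : ℝ → ℝ) (hv0 : ∀ x, 0 ≤ v x) (hvBV : BoundedVariationOn v (Icc (-1) 1))
    (hv1 : ∫ x, v x ∂unif = 1)
    (ν : Fin k → ℝ)
    (hν : ∀ i, ν i = if (i : ℕ) = 0 ∨ (i : ℕ) = k - 1 then 1 / 2 else 1)
    (q : Fin k → ℝ)
    (hq : ∀ i, q i = ν i / (2 * (k - 1)) *
      ∑ j ∈ Finset.range (2 * k - 2),
        Real.cos (j * ((k - 1 - (i : ℕ) : ℕ) : ℝ) * π / (k - 1)) *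
          ∫ x in (-1 : ℝ)..1, Polynomial.eval x (Polynomial.Chebyshev.T ℝ (j : ℤ)) * v x)
    (r : ℝ) (hr0 : 0 ≤ r) (hr1 : r ≤ 1)
    (p : Fin k → ℝ) (hp : ∀ i, p i = ν i / (k - 1) - r * q i)
    (hrα : ∀ i, 0 < q i → r ≤ ν i / ((k - 1) * q i)) :
    EkOptimal k (by omega) v r
      (ENNReal.ofReal r • vMeas v
        + ∑ i : Fin k, ENNReal.ofReal (p i) •
            Measure.dirac (Real.cos (π * ((k - 1 - (i : ℕ) : ℕ) : ℝ) / (k - 1)))) := by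
  obtain ⟨n, rfl⟩ : ∃ n, k = n + 1 := ⟨k - 1, by omega⟩
  have hn : 0 < n := by omega
  have hnR : (0 : ℝ) < n := by exact_mod_cast hn
  have hcast : ((n + 1 : ℕ) : ℝ) - 1 = n := by push_cast; ring
  simp only [hcast, Nat.add_sub_cancel] at hν hq hp hrα ⊢
  set c : ℕ → ℝ := fun j =>
    ∫ x in (-1 : ℝ)..1, Polynomial.eval x (Polynomial.Chebyshev.T ℝ (j : ℤ)) * v x with hc
  have hq' : ∀ i, q i = ν i / (2 * n) *
      ∑ m ∈ Finset.range (2 * n), Real.cos (((m : ℕ) : ℤ) * ang n i) * c m := by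
    intro i
    rw [hq i, show 2 * (n + 1) - 2 = 2 * n by omega]
    congr 1
    refine Finset.sum_congr rfl fun m _ => ?_
    congr 2
    simp only [ang, Int.cast_natCast]
    ring
  set t : Fin (n + 1) → ℝ := fun i => Real.cos (ang n i) with ht
  change EkOptimal (n + 1) n.succ_pos v r (design (vMeas v) r p t)
  have hprob := isProbabilityMeasure_vMeas hv0 hv1
  have hVc := vMeas_compl v
  have hνpos : ∀ i, 0 < ν i := fun i => by rw [hν]; split_ifs <;> norm_num
  have hp0 : ∀ i, 0 ≤ p i := by
    intro i
    rw [hp]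
    have h1 : 0 < ν i / n := div_pos (hνpos i) hnR
    rcases lt_or_ge 0 (q i) with hqi | hqi
    · have h2 := hrα i hqi
      rw [← div_div, le_div_iff₀ hqi] at h2
      linarith
    · nlinarith
  have hpr : r = 0 → ∀ i, 0 < p i := by
    rintro rfl i
    rw [hp, zero_mul, sub_zero]
    exact div_pos (hνpos i) hnR
  have htI : ∀ i, t i ∈ Icc (-1 : ℝ) 1 := fun i => Real.cos_mem_Icc _
  have hangI : ∀ i, ang n i ∈ Icc 0 π := by
    intro i
    have h1 : ((n - (i : ℕ) : ℕ) : ℝ) ≤ n := by exact_mod_cast Nat.sub_le _ _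
    refine ⟨by unfold ang; positivity, ?_⟩
    rw [ang, div_le_iff₀ hnR]
    exact mul_le_mul_of_nonneg_left h1 Real.pi_pos.le
  have htinj : Function.Injective t := by
    intro i j hij
    have h1 := Real.injOn_cos (hangI i) (hangI j) hij
    simp only [ang] at h1
    field_simp at h1
    have h2 : n - (i : ℕ) = n - (j : ℕ) := by exact_mod_cast h1
    exact Fin.ext (by omega)
  have hc0 : c 0 = 2 := by
    have h1 := integral_vMeas hv0 hv1 (fun _ => 1)
    rw [hc]
    simp at h1 ⊢
    linarith
  have hνsum : ∑ i, ν i = n := by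
    have := sum_weight_cos n hn ν hν 0
    simpa using this
  have hqsum : ∑ i, q i = 1 := by
    rw [sum_q n hn ν q c hν hq', hc0]
    norm_num
  have hpg : ∀ g : ℝ → ℝ, ∑ i, p i * g (t i)
      = (∑ i, ν i * g (t i)) / n - r * ∑ i, q i * g (t i) := by
    intro g
    rw [Finset.sum_div, Finset.mul_sum, ← Finset.sum_sub_distrib]
    exact Finset.sum_congr rfl fun i _ => by rw [hp]; ring
  have hpsum : ∑ i, p i = 1 - r := by
    have := hpg fun _ => 1
    simpa [hνsum, hqsum, hnR.ne'] using this
  have hsum : r + ∑ i, p i = 1 := by rw [hpsum]; ring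
  have hmem := memUps_design hv0 hvBV hv1 hr0 hp0 htI hsum
  have hprobξ := hmem.1.1
  have hξc := memXi_compl hmem.1
  have htT : ∀ (j : ℤ) i, (Polynomial.Chebyshev.T ℝ j).eval (t i) = Real.cos (j * ang n i) :=
    fun j i => Polynomial.Chebyshev.T_real_cos _ _
  refine ekOptimal_of_orthogonal n hmem
    (design_det_ne_zero n.succ_pos ((vMeas_ac v).trans
      (Measure.absolutelyContinuous_of_le Measure.restrict_le_self))
      hVc hr0 hp0 hpr htI htinj hsum) ?_ ?_
  · intro j hj
    have := map_X_pow_mul_T_eq_zero (intPoly _ hξc) n ?_ j hj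
    · simpa [intPoly] using this
    intro i hi
    change ∫ y, _ ∂_ = 0
    simp only [Polynomial.eval_mul]
    rw [integral_design hVc hr0 hp0 (by fun_prop), hpg fun y =>
      (Polynomial.Chebyshev.T ℝ i).eval y * (Polynomial.Chebyshev.T ℝ n).eval y]
    have h1 := sum_q_cos_mul_cos n hn ν q c hν hq' i hi
    have h2 := sum_weight_cos_mul_cos n hn ν hν i n
    have d1 : ¬ (2 * n : ℤ) ∣ i + n := fun h => by
      have := Int.le_of_dvd (by omega) h; omega
    have d2 : ¬ (2 * n : ℤ) ∣ i - n := fun h => by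
      have := Int.le_of_dvd (by omega) ((dvd_neg).mpr h); omega
    rw [if_neg d1, if_neg d2] at h2
    -- The product formula turns `∫ T_i T_n dV` into the same two moments as the quadrature sum.
    have h3 : ∫ y, (Polynomial.Chebyshev.T ℝ i).eval y * (Polynomial.Chebyshev.T ℝ n).eval y
        ∂(vMeas v) = (c (n - i) + c (n + i)) / 4 := by
      have e : ∀ y, (Polynomial.Chebyshev.T ℝ i).eval y * (Polynomial.Chebyshev.T ℝ n).eval y
          = ((Polynomial.Chebyshev.T ℝ ((n - i : ℕ) : ℤ)).eval y
            + (Polynomial.Chebyshev.T ℝ ((n + i : ℕ) : ℤ)).eval y) / 2 := by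
        intro y
        have := congrArg (Polynomial.eval y) (Polynomial.Chebyshev.T_mul_T ℝ n i)
        rw [Nat.cast_sub hi.le, Nat.cast_add]
        simp only [Polynomial.eval_mul, Polynomial.eval_add, Polynomial.eval_ofNat] at this
        linarith
      simp only [e]
      rw [integral_div, integral_add (integrable_of_continuous hVc (by fun_prop))
        (integrable_of_continuous hVc (by fun_prop)), integral_vMeas hv0 hv1,
        integral_vMeas hv0 hv1]
      ring
    simp only [htT, h3]
    rw [h2]
    have h4 : ∑ i_1, q i_1 * (Real.cos ((i : ℤ) * ang n i_1) * Real.cos ((n : ℤ) * ang n i_1))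
        = (c (n - i) + c (n + i)) / 4 := by
      rw [← h1]
      exact Finset.sum_congr rfl fun a _ => by ring
    rw [h4]
    ring
  · intro η hη
    have := hη.1.1
    refine (integral_T_sq_le hr0 hVc (memXi_compl hη.1) hη.2 n).trans (le_of_eq ?_)
    rw [integral_design hVc hr0 hp0 (by fun_prop), ← hpsum]
    congr 1
    refine Finset.sum_congr rfl fun i _ => ?_
    -- At the Chebyshev extrema `T_n = ± 1`.
    have : Real.sin ((n : ℤ) * ang n i) = 0 := by
      have : ((n : ℤ) : ℝ) * ang n i = ((n - (i : ℕ) : ℕ) : ℝ) * π := by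
        simp only [ang, Int.cast_natCast]
        field_simp
      rw [this, Real.sin_nat_mul_pi]
    rw [htT, Real.cos_sq', this]
    ring
end

section
/- For quadratic regression (k = 3) on [−1,1] with constant weight v ≡ 1 and any r ∈ [0, 3/4], the design ξ = r·λ̃ + (1/4 − r/6)(δ_{−1} + δ_1) + (1/2 − 2r/3)·δ_0 is e_3-optimal in Υ[r], i.e., it minimizes e_3ᵀ M(·)⁻¹ e_3 over Υ[r]. (Example 3.4(b)) -/
/-!
Write `q(x) = x² - 1/2` and `S = 1/4 - 2r/15`. The design `ξ` of the theorem has moments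
`1, 0, 1/2, 0, 1/2 - 2r/15`, so `e₃ᵀ M(ξ)⁻¹ e₃ = 1/S`
(`ekOptimal_quadratic_moments`, `inv_symmetric_moments`).

For a competitor `η` put `c = M(η)⁻¹ e₃` and `p = cᵀ f`. Then `∫ p² dη = c₂ = e₃ᵀ M(η)⁻¹ e₃` and
`∫ p q dη = 1`, so `0 ≤ ∫ (S p - q)² dη = S² c₂ - 2 S + ∫ q² dη`. On `[-1, 1]` we have `q² ≤ 1/4`;
since `η` dominates `r λ̃`, this gives `1/4 - ∫ q² dη ≥ r ∫ (1/4 - q²) dλ̃ = 2r/15`, that is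
`∫ q² dη ≤ S` (`moment_bound`). Hence `S² c₂ ≥ S`, i.e. `c₂ ≥ 1/S`. Equality holds for `ξ` because
`|q|` attains its maximum over `[-1, 1]` exactly at `-1, 0, 1`, the atoms of `ξ`.
-/

set_option autoImplicit false

open MeasureTheory Set ENNReal

lemma vMeas_one : vMeas (fun _ => (1 : ℝ)) = unif := by
  simp [vMeas]

lemma integral_unif (f : ℝ → ℝ) : ∫ x, f x ∂unif = (∫ x in (-1)..1, f x) / 2 := by
  rw [unif, integral_smul_measure, intervalIntegral.integral_of_le (by norm_num),
    integral_Icc_eq_integral_Ioc]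
  simp
  ring

lemma unif_ae : ∀ᵐ x ∂unif, x ∈ Icc (-1 : ℝ) 1 :=
  Measure.ae_smul_measure (ae_restrict_mem measurableSet_Icc) _

instance : IsProbabilityMeasure unif := by
  constructor
  simp only [unif, Measure.smul_apply, Measure.restrict_apply_univ, Real.volume_Icc, smul_eq_mul]
  norm_num
  exact ENNReal.inv_mul_cancel (by simp) (by simp)

lemma MemXi.ae_mem {η : Measure ℝ} (h : MemXi η) : ∀ᵐ x ∂η, x ∈ Icc (-1 : ℝ) 1 := by
  obtain ⟨-, s, w, d, hs, -, -, rfl⟩ := h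
  rw [ae_add_measure_iff]
  refine ⟨?_, ?_⟩
  · rw [ae_iff]
    simp only [Measure.coe_finsetSum, Finset.sum_apply, Measure.smul_apply, smul_eq_mul]
    refine Finset.sum_eq_zero fun t ht => ?_
    have h1 : t ∈ Icc (-1 : ℝ) 1 := hs ht
    have hm : MeasurableSet {a : ℝ | a ∉ Icc (-1 : ℝ) 1} := measurableSet_Icc.compl
    rw [Measure.dirac_apply' _ hm, Set.indicator_of_notMem (by simpa using h1), mul_zero]
  · exact (withDensity_absolutelyContinuous _ _).ae_le (ae_restrict_mem measurableSet_Icc)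

lemma integrable_of_continuous_s11 {η : Measure ℝ} [IsFiniteMeasure η]
    (h : ∀ᵐ x ∂η, x ∈ Icc (-1 : ℝ) 1) {f : ℝ → ℝ} (hf : Continuous f) : Integrable f η := by
  obtain ⟨C, hC⟩ := isCompact_Icc.exists_bound_of_continuousOn (s := Icc (-1 : ℝ) 1) hf.continuousOn
  exact Integrable.of_bound hf.aestronglyMeasurable C (h.mono hC)

/-- Among designs on `[-1, 1]` dominating `r λ̃`, the integral of `(x² - 1/2)²`, here expanded into
moments, is at most `1/4 - 2r/15`. -/
lemma moment_bound {r : ℝ} (hr : 0 ≤ r) {η : Measure ℝ}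
    (h : MemUps (fun _ => (1 : ℝ)) r η) :
    ∫ x, x ^ 4 ∂η - ∫ x, x ^ 2 ∂η + 1 / 4 ≤ 1 / 4 - 2 * r / 15 := by
  obtain ⟨hX, hle⟩ := h
  have : IsProbabilityMeasure η := hX.1
  rw [vMeas_one] at hle
  have hi := fun n : ℕ => integrable_of_continuous_s11 hX.ae_mem (continuous_pow n)
  have key : ∫ x, (x ^ 2 - x ^ 4) ∂(ENNReal.ofReal r • unif) ≤ ∫ x, (x ^ 2 - x ^ 4) ∂η := by
    refine integral_mono_measure hle ?_ ((hi 2).sub (hi 4))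
    filter_upwards [hX.ae_mem] with x hx
    have : x ^ 2 ≤ 1 := by nlinarith [hx.1, hx.2]
    simp only [Pi.zero_apply]
    nlinarith [sq_nonneg x]
  rw [integral_sub (hi 2) (hi 4), integral_smul_measure, integral_unif,
    intervalIntegral.integral_sub (by simp) (by simp), integral_pow, integral_pow,
    ENNReal.toReal_ofReal hr, smul_eq_mul] at key
  norm_num at key
  linarith

lemma integral_quadratic_sq {η : Measure ℝ} [IsProbabilityMeasure η]
    (h : ∀ᵐ x ∂η, x ∈ Icc (-1 : ℝ) 1) (a b c : ℝ) :
    ∫ x, (a + b * x + c * x ^ 2) ^ 2 ∂η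
      = a ^ 2 + 2 * a * b * ∫ x, x ^ 1 ∂η + (b ^ 2 + 2 * a * c) * ∫ x, x ^ 2 ∂η
        + 2 * b * c * ∫ x, x ^ 3 ∂η + c ^ 2 * ∫ x, x ^ 4 ∂η := by
  have hi := fun (k : ℝ) (n : ℕ) =>
    (integrable_of_continuous_s11 h (continuous_pow n)).const_mul k
  have e : ∀ x : ℝ, (a + b * x + c * x ^ 2) ^ 2 = a ^ 2 + 2 * a * b * x ^ 1
      + (b ^ 2 + 2 * a * c) * x ^ 2 + 2 * b * c * x ^ 3 + c ^ 2 * x ^ 4 := fun x => by ring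
  have h0 : Integrable (fun _ : ℝ => a ^ 2) η := integrable_const _
  have h1 : Integrable (fun x : ℝ => a ^ 2 + 2 * a * b * x ^ 1) η := h0.add (hi _ 1)
  have h2 : Integrable (fun x : ℝ => a ^ 2 + 2 * a * b * x ^ 1
      + (b ^ 2 + 2 * a * c) * x ^ 2) η := h1.add (hi _ 2)
  have h3 : Integrable (fun x : ℝ => a ^ 2 + 2 * a * b * x ^ 1
      + (b ^ 2 + 2 * a * c) * x ^ 2 + 2 * b * c * x ^ 3) η := h2.add (hi _ 3)
  simp only [e]
  rw [integral_add h3 (hi _ 4), integral_add h2 (hi _ 3), integral_add h1 (hi _ 2),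
    integral_add h0 (hi _ 1)]
  simp only [integral_const_mul, integral_const, probReal_univ, one_smul]

/-- Every admissible design with invertible moment matrix has `e₃ᵀ M(η)⁻¹ e₃ ≥ 1/S`, where
`S = 1/4 - 2r/15`. -/
lemma lower_bound {r : ℝ} (hr : r ∈ Icc (0 : ℝ) (3 / 4)) {η : Measure ℝ}
    (h : MemUps (fun _ => (1 : ℝ)) r η) (hdet : (designMatrix 3 η).det ≠ 0) :
    (1 / 4 - 2 * r / 15)⁻¹ ≤ (designMatrix 3 η)⁻¹ 2 2 := by
  have hb := moment_bound hr.1 h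
  have : IsProbabilityMeasure η := h.1.1
  set S : ℝ := 1 / 4 - 2 * r / 15 with hS
  have hSpos : 0 < S := by rw [hS]; linarith [hr.2]
  have hmul := Matrix.mul_nonsing_inv (designMatrix 3 η) (isUnit_iff_ne_zero.mpr hdet)
  have e0 := congrFun (congrFun hmul 0) 2
  have e1 := congrFun (congrFun hmul 1) 2
  have e2 := congrFun (congrFun hmul 2) 2
  generalize (designMatrix 3 η)⁻¹ = N at *
  -- The integrand is `(S p - q)²`, with `p` having coefficients the last column of `M(η)⁻¹`.
  have hq := integral_quadratic_sq h.1.ae_mem (S * N 0 2 + 1 / 2) (S * N 1 2) (S * N 2 2 - 1)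
  have hnn : 0 ≤ ∫ x, (S * N 0 2 + 1 / 2 + S * N 1 2 * x + (S * N 2 2 - 1) * x ^ 2) ^ 2 ∂η :=
    integral_nonneg fun x => sq_nonneg _
  rw [hq] at hnn
  simp only [Matrix.mul_apply, Fin.sum_univ_three, designMatrix, Matrix.of_apply] at e0 e1 e2
  rw [Matrix.one_apply_ne (by decide)] at e0 e1
  norm_num at e0 e1 e2 hnn
  generalize (∫ x, x ∂η) = m1 at *
  generalize (∫ x, x ^ 2 ∂η) = m2 at *
  generalize (∫ x, x ^ 3 ∂η) = m3 at *
  generalize (∫ x, x ^ 4 ∂η) = m4 at *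
  have h2 : 0 ≤ S ^ 2 * N 2 2 - 2 * S + (m4 - m2 + 1 / 4) := by
    linear_combination hnn + (S ^ 2 * N 0 2 + S) * e0 + S ^ 2 * N 1 2 * e1
      + (S ^ 2 * N 2 2 - 2 * S) * e2
  have h3 : S * 1 ≤ S * (S * N 2 2) := by linarith
  exact (inv_le_iff_one_le_mul₀' hSpos).mpr (le_of_mul_le_mul_left h3 hSpos)

lemma inv_symmetric_moments {S : ℝ} (hS : S ≠ 0) {M : Matrix (Fin 3) (Fin 3) ℝ}
    (hM : M = !![1, 0, 1 / 2; 0, 1 / 2, 0; 1 / 2, 0, S + 1 / 4]) :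
    M.det ≠ 0 ∧ M⁻¹ 2 2 = S⁻¹ := by
  have hd : M.det = S / 2 := by rw [hM, Matrix.det_fin_three]; simp; ring
  refine ⟨by rw [hd]; positivity, ?_⟩
  have : M⁻¹ = !![1 + (4 * S)⁻¹, 0, -(2 * S)⁻¹; 0, 2, 0; -(2 * S)⁻¹, 0, S⁻¹] := by
    apply Matrix.inv_eq_right_inv
    rw [hM]
    ext i j
    fin_cases i <;> fin_cases j <;> simp [Matrix.mul_apply, Fin.sum_univ_three] <;>
      field_simp <;> ring
  rw [this]
  simp

lemma ekOptimal_quadratic_mem (r : ℝ) (hr : r ∈ Icc (0 : ℝ) (3 / 4)) :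
    MemUps (fun _ => (1 : ℝ)) r
      (ENNReal.ofReal r • unif
        + ENNReal.ofReal (1 / 4 - r / 6) • (Measure.dirac (-1) + Measure.dirac 1)
        + ENNReal.ofReal (1 / 2 - 2 * r / 3) • Measure.dirac 0) := by
  obtain ⟨h0, h1⟩ := hr
  refine ⟨⟨⟨?_⟩, ?_⟩, ?_⟩
  · simp only [Measure.add_apply, Measure.smul_apply, smul_eq_mul, measure_univ, mul_one]
    rw [mul_add, mul_one, ← ENNReal.ofReal_add (by linarith) (by linarith),
      ← ENNReal.ofReal_add (by linarith) (by linarith),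
      ← ENNReal.ofReal_add (by linarith) (by linarith)]
    simp only [ENNReal.ofReal_eq_one]
    ring
  · refine ⟨{-1, 1, 0}, fun t => if t = 0 then ENNReal.ofReal (1 / 2 - 2 * r / 3) else
      ENNReal.ofReal (1 / 4 - r / 6), fun _ => r / 2, ?_, ?_, fun _ => by positivity, ?_⟩
    · intro x hx
      simp only [Finset.coe_insert, Finset.coe_singleton, Set.mem_insert_iff,
        Set.mem_singleton_iff] at hx
      rcases hx with rfl | rfl | rfl <;> norm_num
    · rw [BoundedVariationOn, eVariationOn.constant_on]
      · simp
      · rintro _ ⟨_, _, rfl⟩ _ ⟨_, _, rfl⟩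
        rfl
    · have hu : ENNReal.ofReal r • unif
          = ENNReal.ofReal (r / 2) • volume.restrict (Icc (-1 : ℝ) 1) := by
        rw [unif, smul_smul, ENNReal.ofReal_div_of_pos (by norm_num)]
        simp [div_eq_mul_inv]
      rw [withDensity_const, hu, Finset.sum_insert (by norm_num), Finset.sum_insert (by norm_num),
        Finset.sum_singleton]
      simp only [smul_add, ↓reduceIte, one_ne_zero, neg_eq_zero]
      abel
  · rw [vMeas_one, add_assoc]
    exact Measure.le_add_right le_rfl

lemma ekOptimal_quadratic_moments (r : ℝ) (hr : r ∈ Icc (0 : ℝ) (3 / 4)) (n : ℕ) :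
    ∫ x, x ^ n ∂(ENNReal.ofReal r • unif
        + ENNReal.ofReal (1 / 4 - r / 6) • (Measure.dirac (-1) + Measure.dirac 1)
        + ENNReal.ofReal (1 / 2 - 2 * r / 3) • Measure.dirac 0)
      = r * ((1 ^ (n + 1) - (-1) ^ (n + 1)) / (n + 1) / 2)
        + (1 / 4 - r / 6) * ((-1) ^ n + 1) + (1 / 2 - 2 * r / 3) * 0 ^ n := by
  obtain ⟨h0, h1⟩ := hr
  have hd : ∀ t : ℝ, Integrable (fun x : ℝ => x ^ n) (Measure.dirac t) := fun t =>
    integrable_dirac (by simp)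
  have hu : Integrable (fun x : ℝ => x ^ n) unif :=
    integrable_of_continuous_s11 unif_ae (continuous_pow n)
  have hs := (hu.smul_measure (c := ENNReal.ofReal r) (by simp))
  have ht := (((hd (-1)).add_measure (hd 1)).smul_measure (c := ENNReal.ofReal (1 / 4 - r / 6))
    (by simp))
  rw [integral_add_measure (hs.add_measure ht) ((hd 0).smul_measure (by simp)),
    integral_add_measure hs ht, integral_smul_measure, integral_smul_measure,
    integral_smul_measure, integral_add_measure (hd _) (hd _), integral_dirac, integral_dirac,
    integral_dirac, integral_unif, integral_pow, ENNReal.toReal_ofReal h0,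
    ENNReal.toReal_ofReal (by linarith), ENNReal.toReal_ofReal (by linarith)]
  simp

/-- **Example 3.4(b)**: for quadratic regression (`k = 3`) with constant weight `v ≡ 1`
and any `r ∈ [0, 3/4]`, the design `ξ = r·λ̃ + (1/4 - r/6)(δ_{-1} + δ_1) + (1/2 - 2r/3)δ_0`
is `e_3`-optimal in `Υ[r]`. -/
theorem ekOptimal_quadratic (r : ℝ) (hr : r ∈ Icc (0 : ℝ) (3 / 4)) :
    EkOptimal 3 three_pos (fun _ => (1 : ℝ)) r
      (ENNReal.ofReal r • unif
        + ENNReal.ofReal (1 / 4 - r / 6) • (Measure.dirac (-1) + Measure.dirac 1)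
        + ENNReal.ofReal (1 / 2 - 2 * r / 3) • Measure.dirac 0) := by
  have hmem := ekOptimal_quadratic_mem r hr
  have hmom := ekOptimal_quadratic_moments r hr
  have hS : (1 / 4 - 2 * r / 15 : ℝ) ≠ 0 := by linarith [hr.2]
  generalize ENNReal.ofReal r • unif
        + ENNReal.ofReal (1 / 4 - r / 6) • (Measure.dirac (-1) + Measure.dirac 1)
        + ENNReal.ofReal (1 / 2 - 2 * r / 3) • Measure.dirac (0 : ℝ) = ξ at *
  obtain ⟨hdet, hinv⟩ := inv_symmetric_moments hS (M := designMatrix 3 ξ) (by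
    ext i j
    simp only [designMatrix, Matrix.of_apply, hmom]
    fin_cases i <;> fin_cases j <;> norm_num <;> ring)
  refine ⟨hmem, hdet, fun η hη hηdet => ?_⟩
  change (designMatrix 3 ξ)⁻¹ 2 2 ≤ (designMatrix 3 η)⁻¹ 2 2
  rw [hinv]
  exact lower_bound hr hη hηdet
end
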